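/- arXiv:2001.04071 — 5 statements merged into one kernel-verified Lean document; each statement's English description precedes it below -/
import Mathlib

section
/- For every ξ' ∈ ℝ^{n−1} with ξ' ≠ 0, one has A(ξ') ≥ √(λ̃₁|ξ'|² + F(ξ')²) > |F(ξ')|, where λ̃₁ = λ₀²/Λ₀². -/
/-- The natural embedding of the first `n-1` indices into `Fin n`. -/
def emb (n : ℕ) : Fin (n - 1) → Fin n := Fin.castLE (Nat.sub_le n 1)

/-!
Put `c = a_nn` and let `q(x) = c x² + 2 T x + S` be the quadratic form of `a` along the real line
`x ↦ (ξ', x)`. Completing the square, `q(x) / c = (x + E + iF)² + (A - iB)²`. At the real point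
`x = B - E` this is `(B + iF)² + (A - iB)²`, whose real part is `A² - F²`: there `B` and `E` drop
out. So any lower bound `κ |ξ|² ≤ Re (a(ξ) / a_nn)` on real vectors gives `κ |ξ'|² + F² ≤ A²`. For
`a = M + iγN`, the real part of `a(ξ) / a_nn` is a weighted mean of `M(ξ) / M_nn` and
`N(ξ) / N_nn`, both of which are at least `(λ₀ / Λ₀) |ξ|²`.
-/

theorem sq_div_sq_le_div {x y : ℝ} (hx : 0 ≤ x) (hxy : x ≤ y) : x ^ 2 / y ^ 2 ≤ x / y := by
  rw [← div_pow]
  have hy : 0 ≤ y := hx.trans hxy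
  exact pow_le_of_le_one (by positivity) (div_le_one_of_le₀ hxy hy) two_ne_zero

section Sums

theorem sum_sum_mul_single_mul_single {ι R : Type*} [Fintype ι] [DecidableEq ι]
    [NonAssocSemiring R] (a : ι → ι → R) (e : ι) :
    ∑ l, ∑ j, a l j * (Pi.single e 1 : ι → R) l * (Pi.single e 1 : ι → R) j = a e e := by
  simp [Pi.single_apply]

theorem sum_sum_mul_mul_castSucc {R : Type*} [CommSemiring R] {m : ℕ}
    {a : Fin (m + 1) → Fin (m + 1) → R}
    (ha : ∀ j : Fin m, a j.castSucc (Fin.last m) = a (Fin.last m) j.castSucc)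
    (ξ : Fin (m + 1) → R) :
    ∑ l, ∑ j, a l j * ξ l * ξ j =
      (∑ l : Fin m, ∑ j : Fin m, a l.castSucc j.castSucc * ξ l.castSucc * ξ j.castSucc) +
        2 * ξ (Fin.last m) * (∑ j : Fin m, a (Fin.last m) j.castSucc * ξ j.castSucc) +
        a (Fin.last m) (Fin.last m) * ξ (Fin.last m) ^ 2 := by
  have hcol : ∑ l : Fin m, a l.castSucc (Fin.last m) * ξ l.castSucc * ξ (Fin.last m) =
      ξ (Fin.last m) * ∑ j : Fin m, a (Fin.last m) j.castSucc * ξ j.castSucc := by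
    simp only [ha, mul_comm (ξ (Fin.last m)), Finset.sum_mul]
  have hrow : ∑ j : Fin m, a (Fin.last m) j.castSucc * ξ (Fin.last m) * ξ j.castSucc =
      ξ (Fin.last m) * ∑ j : Fin m, a (Fin.last m) j.castSucc * ξ j.castSucc := by
    simp only [Finset.mul_sum, mul_left_comm, mul_assoc]
  simp only [Fin.sum_univ_castSucc, Finset.sum_add_distrib, hcol, hrow]
  ring

theorem sum_sum_mul_sub_mul_mul_mul {ι R : Type*} [Fintype ι] [CommRing R]
    (a : ι → ι → R) (r ξ : ι → R) (c : R) :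
    ∑ l, ∑ j, (a l j * c - r l * r j) * ξ l * ξ j =
      (∑ l, ∑ j, a l j * ξ l * ξ j) * c - (∑ j, r j * ξ j) ^ 2 := by
  rw [sq, Finset.sum_mul_sum]
  simp only [Finset.sum_mul, ← Finset.sum_sub_distrib]
  exact Finset.sum_congr rfl fun l _ => Finset.sum_congr rfl fun j _ => by ring

theorem sum_sum_ofReal_add_mul_I {ι : Type*} [Fintype ι] (M N : ι → ι → ℝ) (γ : ℝ)
    (ξ : ι → ℝ) :
    ∑ l, ∑ j, ((M l j : ℂ) + γ * N l j * Complex.I) * ξ l * ξ j =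
      ((∑ l, ∑ j, M l j * ξ l * ξ j : ℝ) : ℂ) +
        (γ * ∑ l, ∑ j, N l j * ξ l * ξ j : ℝ) * Complex.I := by
  push_cast
  simp only [Finset.mul_sum, Finset.sum_mul, ← Finset.sum_add_distrib]
  exact Finset.sum_congr rfl fun l _ => Finset.sum_congr rfl fun j _ => by ring

theorem sum_sq_pos_of_ne_zero {ι : Type*} [Fintype ι] {ξ : ι → ℝ} (hξ : ξ ≠ 0) :
    0 < ∑ i, ξ i ^ 2 := by
  obtain ⟨i, hi⟩ := Function.ne_iff.mp hξ
  exact Finset.sum_pos' (fun i _ => sq_nonneg (ξ i)) ⟨i, Finset.mem_univ i, sq_pos_of_ne_zero hi⟩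

end Sums

section EllipticForms

variable {ι : Type*} [Fintype ι] {M N : ι → ι → ℝ} {lam Λ : ℝ}

theorem le_diag_of_forall_mul_sum_sq_le
    (hM : ∀ ξ : ι → ℝ, lam * ∑ i, ξ i ^ 2 ≤ ∑ l, ∑ j, M l j * ξ l * ξ j) (e : ι) :
    lam ≤ M e e := by
  classical
  simpa [sum_sum_mul_single_mul_single, Pi.single_apply, ite_pow] using hM (Pi.single e 1)

theorem diag_le_of_forall_le_mul_sum_sq
    (hM : ∀ ξ : ι → ℝ, ∑ l, ∑ j, M l j * ξ l * ξ j ≤ Λ * ∑ i, ξ i ^ 2) (e : ι) :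
    M e e ≤ Λ := by
  classical
  simpa [sum_sum_mul_single_mul_single, Pi.single_apply, ite_pow] using hM (Pi.single e 1)

theorem div_mul_sum_sq_mul_diag_le (hlam : 0 ≤ lam)
    (hM : ∀ ξ : ι → ℝ, lam * ∑ i, ξ i ^ 2 ≤ ∑ l, ∑ j, M l j * ξ l * ξ j ∧
      ∑ l, ∑ j, M l j * ξ l * ξ j ≤ Λ * ∑ i, ξ i ^ 2) (e : ι) (ξ : ι → ℝ) :
    lam / Λ * (∑ i, ξ i ^ 2) * M e e ≤ ∑ l, ∑ j, M l j * ξ l * ξ j := by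
  have hlam_le : lam ≤ M e e := le_diag_of_forall_mul_sum_sq_le (fun η => (hM η).1) e
  have hle_Λ : M e e ≤ Λ := diag_le_of_forall_le_mul_sum_sq (fun η => (hM η).2) e
  calc lam / Λ * (∑ i, ξ i ^ 2) * M e e = lam * (∑ i, ξ i ^ 2) * (M e e / Λ) := by ring
    _ ≤ lam * ∑ i, ξ i ^ 2 :=
      mul_le_of_le_one_right (by positivity)
        (div_le_one_of_le₀ hle_Λ (hlam.trans (hlam_le.trans hle_Λ)))
    _ ≤ ∑ l, ∑ j, M l j * ξ l * ξ j := (hM ξ).1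

theorem le_re_div_of_mul_sq_le {w z : ℂ} {κ : ℝ} (hw : w ≠ 0)
    (hre : κ * w.re ^ 2 ≤ z.re * w.re) (him : κ * w.im ^ 2 ≤ z.im * w.im) :
    κ ≤ (z / w).re := by
  rw [Complex.div_re, ← add_div, le_div_iff₀ (Complex.normSq_pos.2 hw), Complex.normSq_apply]
  linarith

theorem div_mul_sum_sq_le_re_div_diag (hlam : 0 < lam)
    (hM : ∀ ξ : ι → ℝ, lam * ∑ i, ξ i ^ 2 ≤ ∑ l, ∑ j, M l j * ξ l * ξ j ∧
      ∑ l, ∑ j, M l j * ξ l * ξ j ≤ Λ * ∑ i, ξ i ^ 2)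
    (hN : ∀ ξ : ι → ℝ, lam * ∑ i, ξ i ^ 2 ≤ ∑ l, ∑ j, N l j * ξ l * ξ j ∧
      ∑ l, ∑ j, N l j * ξ l * ξ j ≤ Λ * ∑ i, ξ i ^ 2)
    {γ : ℝ} {a : ι → ι → ℂ} (ha : ∀ l j, a l j = (M l j : ℂ) + γ * N l j * Complex.I)
    (e : ι) (ξ : ι → ℝ) :
    lam / Λ * ∑ i, ξ i ^ 2 ≤ ((∑ l, ∑ j, a l j * ξ l * ξ j) / a e e).re := by
  have hMe : 0 < M e e := hlam.trans_le (le_diag_of_forall_mul_sum_sq_le (fun η => (hM η).1) e)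
  have hNe : 0 < N e e := hlam.trans_le (le_diag_of_forall_mul_sum_sq_le (fun η => (hN η).1) e)
  have hMξ := div_mul_sum_sq_mul_diag_le hlam.le hM e ξ
  have hNξ := div_mul_sum_sq_mul_diag_le hlam.le hN e ξ
  have hre : (a e e).re = M e e := by simp [ha]
  have him : (a e e).im = γ * N e e := by simp [ha]
  have hae : a e e ≠ 0 := fun h => hMe.ne' (by rw [← hre, h, Complex.zero_re])
  simp only [ha _ _, sum_sum_ofReal_add_mul_I] at hae hre him ⊢
  apply le_re_div_of_mul_sq_le hae
  · simp only [hre, Complex.add_re, Complex.ofReal_re, Complex.re_ofReal_mul, Complex.I_re,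
      mul_zero, add_zero]
    linarith [mul_le_mul_of_nonneg_right hMξ hMe.le]
  · simp only [him, Complex.add_im, Complex.ofReal_im, Complex.im_ofReal_mul, Complex.I_im,
      mul_one, zero_add]
    linarith [mul_le_mul_of_nonneg_left hNξ (by positivity : 0 ≤ γ ^ 2 * N e e)]

end EllipticForms

theorem re_quadratic_div_leadingCoeff {c T S : ℂ} {E F A B : ℝ} (hc : c ≠ 0)
    (hT : T / c = E + F * Complex.I)
    (hS : (c ^ 2)⁻¹ * (S * c - T ^ 2) = (A - B * Complex.I) ^ 2) :
    ((S + 2 * (B - E : ℝ) * T + c * (B - E : ℝ) ^ 2) / c).re = A ^ 2 - F ^ 2 := by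
  have hsquare : (S + 2 * (B - E : ℝ) * T + c * (B - E : ℝ) ^ 2) / c =
      ((B - E : ℝ) + T / c) ^ 2 + (c ^ 2)⁻¹ * (S * c - T ^ 2) := by
    field_simp
    ring
  rw [hsquare, hT, hS]
  simp only [sq, Complex.add_re, Complex.add_im, Complex.sub_re, Complex.sub_im, Complex.mul_re,
    Complex.mul_im, Complex.ofReal_re, Complex.ofReal_im, Complex.I_re, Complex.I_im]
  ring

section NormalizedForm

variable {m : ℕ} {a : Fin (m + 1) → Fin (m + 1) → ℂ} {κ : ℝ} {ξ' : Fin m → ℝ} {E F A B : ℝ}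

theorem mul_sum_sq_add_sq_le_sq (hann : a (Fin.last m) (Fin.last m) ≠ 0)
    (hsymm : ∀ j : Fin m, a j.castSucc (Fin.last m) = a (Fin.last m) j.castSucc)
    (hκ : 0 ≤ κ)
    (hell : ∀ ξ : Fin (m + 1) → ℝ, κ * ∑ i, ξ i ^ 2 ≤
      ((∑ l, ∑ j, a l j * ξ l * ξ j) / a (Fin.last m) (Fin.last m)).re)
    (hEF : ∑ j : Fin m, a (Fin.last m) j.castSucc / a (Fin.last m) (Fin.last m) * ξ' j =
      E + F * Complex.I)
    (hb : (a (Fin.last m) (Fin.last m) ^ 2)⁻¹ * ∑ l : Fin m, ∑ j : Fin m,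
      (a l.castSucc j.castSucc * a (Fin.last m) (Fin.last m) -
        a (Fin.last m) l.castSucc * a (Fin.last m) j.castSucc) * ξ' l * ξ' j =
      (A - B * Complex.I) ^ 2) :
    κ * ∑ i, ξ' i ^ 2 + F ^ 2 ≤ A ^ 2 := by
  let ξ : Fin (m + 1) → ℝ := Fin.snoc ξ' (B - E)
  have hsum : ∑ i, ξ i ^ 2 = ∑ i, ξ' i ^ 2 + (B - E) ^ 2 := by
    simp [ξ, Fin.sum_univ_castSucc]
  have hT : (∑ j : Fin m, a (Fin.last m) j.castSucc * ξ' j) / a (Fin.last m) (Fin.last m) =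
      E + F * Complex.I := by
    rw [← hEF, Finset.sum_div]
    simp only [div_mul_eq_mul_div]
  rw [sum_sum_mul_sub_mul_mul_mul] at hb
  have hre : ((∑ l, ∑ j, a l j * ξ l * ξ j) / a (Fin.last m) (Fin.last m)).re =
      A ^ 2 - F ^ 2 := by
    rw [sum_sum_mul_mul_castSucc hsymm fun i => (ξ i : ℂ)]
    simpa only [ξ, Fin.snoc_castSucc, Fin.snoc_last] using
      re_quadratic_div_leadingCoeff hann hT hb
  have hξ := hell ξ
  rw [hsum, hre, mul_add] at hξ
  linarith [mul_nonneg hκ (sq_nonneg (B - E))]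

theorem stmt_5_general
    (hsymm : ∀ j : Fin m, a j.castSucc (Fin.last m) = a (Fin.last m) j.castSucc)
    (hκ : 0 < κ)
    (hell : ∀ ξ : Fin (m + 1) → ℝ, κ * ∑ i, ξ i ^ 2 ≤
      ((∑ l, ∑ j, a l j * ξ l * ξ j) / a (Fin.last m) (Fin.last m)).re)
    (hEF : ∑ j : Fin m, a (Fin.last m) j.castSucc / a (Fin.last m) (Fin.last m) * ξ' j =
      E + F * Complex.I)
    (hA : 0 ≤ A)
    (hb : (a (Fin.last m) (Fin.last m) ^ 2)⁻¹ * ∑ l : Fin m, ∑ j : Fin m,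
      (a l.castSucc j.castSucc * a (Fin.last m) (Fin.last m) -
        a (Fin.last m) l.castSucc * a (Fin.last m) j.castSucc) * ξ' l * ξ' j =
      (A - B * Complex.I) ^ 2)
    (hξ' : ξ' ≠ 0) :
    Real.sqrt (κ * (∑ i, ξ' i ^ 2) + F ^ 2) ≤ A ∧
      |F| < Real.sqrt (κ * (∑ i, ξ' i ^ 2) + F ^ 2) := by
  have hann : a (Fin.last m) (Fin.last m) ≠ 0 := by
    intro h
    have hlast := hell (Pi.single (Fin.last m) 1)
    simp only [h, div_zero, Complex.zero_re] at hlast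
    exact hlast.not_gt
      (mul_pos hκ (sum_sq_pos_of_ne_zero (Pi.single_ne_zero_iff.2 one_ne_zero)))
  refine ⟨Real.sqrt_le_iff.2 ⟨hA, mul_sum_sq_add_sq_le_sq hann hsymm hκ.le hell hEF hb⟩, ?_⟩
  rw [← Real.sqrt_sq_eq_abs]
  exact Real.sqrt_lt_sqrt (sq_nonneg F)
    (lt_add_of_pos_left _ (mul_pos hκ (sum_sq_pos_of_ne_zero hξ')))

end NormalizedForm

/-- for `ξ' ≠ 0`, `A(ξ') ≥ √(λ̃₁|ξ'|² + F(ξ')²) > |F(ξ')|`, `λ̃₁ = λ₀²/Λ₀²`. -/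
theorem stmt_5
    (n : ℕ) (hn : 2 ≤ n)
    (M N : Fin n → Fin n → ℝ) (γ lam₀ Λ₀ : ℝ)
    (hγ : 0 < γ) (hlam₀ : 0 < lam₀) (hlamΛ : lam₀ ≤ Λ₀)
    (hMsym : ∀ l j, M l j = M j l) (hNsym : ∀ l j, N l j = N j l)
    (hM : ∀ ξ : Fin n → ℝ,
      lam₀ * ∑ i, ξ i ^ 2 ≤ ∑ l, ∑ j, M l j * ξ l * ξ j ∧
      ∑ l, ∑ j, M l j * ξ l * ξ j ≤ Λ₀ * ∑ i, ξ i ^ 2)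
    (hN : ∀ ξ : Fin n → ℝ,
      lam₀ * ∑ i, ξ i ^ 2 ≤ ∑ l, ∑ j, N l j * ξ l * ξ j ∧
      ∑ l, ∑ j, N l j * ξ l * ξ j ≤ Λ₀ * ∑ i, ξ i ^ 2)
    (a : Fin n → Fin n → ℂ)
    (ha : ∀ l j, a l j = (M l j : ℂ) + (γ : ℂ) * (N l j : ℂ) * Complex.I)
    (en : Fin n) (hen : (en : ℕ) = n - 1)
    (E F : (Fin (n - 1) → ℝ) → ℝ)
    (hEF : ∀ ξ' : Fin (n - 1) → ℝ,
      ∑ j, a en (emb n j) / a en en * (ξ' j : ℂ) = (E ξ' : ℂ) + (F ξ' : ℂ) * Complex.I)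
    (A B : (Fin (n - 1) → ℝ) → ℝ) (hA0 : ∀ ξ' : Fin (n - 1) → ℝ, 0 ≤ A ξ')
    (hb : ∀ ξ' : Fin (n - 1) → ℝ,
      ((a en en) ^ 2)⁻¹ * ∑ l, ∑ j, (a (emb n l) (emb n j) * a en en - a en (emb n l) * a en (emb n j)) * (ξ' l : ℂ) * (ξ' j : ℂ) = ((A ξ' : ℂ) - (B ξ' : ℂ) * Complex.I) ^ 2) :
    ∀ ξ' : Fin (n - 1) → ℝ, ξ' ≠ 0 →
      Real.sqrt (lam₀ ^ 2 / Λ₀ ^ 2 * (∑ i, ξ' i ^ 2) + F ξ' ^ 2) ≤ A ξ' ∧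
      |F ξ'| < Real.sqrt (lam₀ ^ 2 / Λ₀ ^ 2 * (∑ i, ξ' i ^ 2) + F ξ' ^ 2) := by
  intro ξ' hξ'
  obtain ⟨m, rfl⟩ : ∃ m, n = m + 1 := ⟨n - 1, by lia⟩
  obtain rfl : en = Fin.last m := Fin.ext hen
  have hΛ₀ : 0 < Λ₀ := hlam₀.trans_le hlamΛ
  have hasymm (l j) : a l j = a j l := by rw [ha, ha, hMsym, hNsym]
  have hell (ξ : Fin (m + 1) → ℝ) : lam₀ ^ 2 / Λ₀ ^ 2 * ∑ i, ξ i ^ 2 ≤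
      ((∑ l, ∑ j, a l j * ξ l * ξ j) / a (Fin.last m) (Fin.last m)).re :=
    (mul_le_mul_of_nonneg_right (sq_div_sq_le_div hlam₀.le hlamΛ) (by positivity)).trans
      (div_mul_sum_sq_le_re_div_diag hlam₀ hM hN ha (Fin.last m) ξ)
  exact stmt_5_general (fun _ => hasymm _ _) (by positivity) hell (hEF ξ') (hA0 ξ') (hb ξ') hξ'
end

section
/- For every ξ ∈ ℝⁿ, Re(a_{nn}^{−1}·𝒜ξ·ξ) ≥ (λ₀²/Λ₀²)|ξ|², where 𝒜ξ·ξ = Σ_{ℓ,j=1}^n a_{ℓj}ξ_ℓξ_j. -/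
/-!
Write `m = M k k` and `v = N k k`. Ellipticity gives `M ξ · ξ ≥ λ |ξ|² ≥ c m` and `N ξ · ξ ≥ c v`
with the same `c = (λ / Λ) |ξ|²`, because `m, v ≤ Λ`. Hence
`m (M ξ · ξ) + γ² v (N ξ · ξ) ≥ c (m² + γ² v²)`, that is `Re ((m + iγv)⁻¹ (𝒜 ξ · ξ)) ≥ c`.
Since `λ ≤ Λ`, the constant `λ / Λ` obtained this way is at least `λ² / Λ²`.
-/

section ComplexParts

lemma le_re_inv_mul_iff {z w : ℂ} (hz : z ≠ 0) {c : ℝ} :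
    c ≤ (z⁻¹ * w).re ↔ c * Complex.normSq z ≤ z.re * w.re + z.im * w.im := by
  have hre : (z⁻¹ * w).re = (z.re * w.re + z.im * w.im) / Complex.normSq z := by
    rw [Complex.mul_re, Complex.inv_re, Complex.inv_im]
    ring
  rw [hre, le_div_iff₀ (Complex.normSq_pos.mpr hz)]

variable {ι κ : Type*} [Fintype ι] [Fintype κ] (a : ι → κ → ℂ) (x : ι → ℝ) (y : κ → ℝ)

lemma re_sum_sum_mul_ofReal_mul_ofReal :
    (∑ l, ∑ j, a l j * (x l : ℂ) * (y j : ℂ)).re = ∑ l, ∑ j, (a l j).re * x l * y j := by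
  simp only [Complex.re_sum, Complex.re_mul_ofReal]

lemma im_sum_sum_mul_ofReal_mul_ofReal :
    (∑ l, ∑ j, a l j * (x l : ℂ) * (y j : ℂ)).im = ∑ l, ∑ j, (a l j).im * x l * y j := by
  simp only [Complex.im_sum, Complex.im_mul_ofReal]

end ComplexParts

section DiagonalEntries

variable {ι R : Type*} [Fintype ι]

lemma le_diag_of_le_quadForm [Semiring R] [LE R] {A : ι → ι → R} {c : R}
    (hA : ∀ ξ : ι → R, c * ∑ i, ξ i ^ 2 ≤ ∑ l, ∑ j, A l j * ξ l * ξ j) (k : ι) :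
    c ≤ A k k := by
  classical
  simpa [Pi.single_apply] using hA (Pi.single k 1)

lemma diag_le_of_quadForm_le [Semiring R] [LE R] {A : ι → ι → R} {C : R}
    (hA : ∀ ξ : ι → R, ∑ l, ∑ j, A l j * ξ l * ξ j ≤ C * ∑ i, ξ i ^ 2) (k : ι) :
    A k k ≤ C := by
  classical
  simpa [Pi.single_apply] using hA (Pi.single k 1)

lemma div_mul_sum_sq_mul_diag_le_quadForm [Field R] [LinearOrder R] [IsStrictOrderedRing R]
    {A : ι → ι → R} {c C : R} (hc : 0 < c)
    (hA : ∀ ξ : ι → R, c * ∑ i, ξ i ^ 2 ≤ ∑ l, ∑ j, A l j * ξ l * ξ j)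
    {k : ι} (hk : A k k ≤ C) (ξ : ι → R) :
    c / C * (∑ i, ξ i ^ 2) * A k k ≤ ∑ l, ∑ j, A l j * ξ l * ξ j := by
  have hC : 0 < C := hc.trans_le ((le_diag_of_le_quadForm hA k).trans hk)
  calc c / C * (∑ i, ξ i ^ 2) * A k k
      ≤ c / C * (∑ i, ξ i ^ 2) * C := by gcongr
    _ = c * ∑ i, ξ i ^ 2 := by field_simp
    _ ≤ ∑ l, ∑ j, A l j * ξ l * ξ j := hA ξ

end DiagonalEntries

lemma sq_div_sq_le_div_s6 {R : Type*} [Field R] [LinearOrder R] [IsStrictOrderedRing R] {c C : R}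
    (hc : 0 ≤ c) (hcC : c ≤ C) : c ^ 2 / C ^ 2 ≤ c / C := by
  rw [← div_pow]
  exact pow_le_of_le_one (div_nonneg hc (hc.trans hcC)) (div_le_one_of_le₀ hcC (hc.trans hcC))
    two_ne_zero

theorem stmt_6_general {ι : Type*} [Fintype ι] {M N : ι → ι → ℝ} {γ lam₀ Λ₀ : ℝ}
    (hlam₀ : 0 < lam₀)
    (hM : ∀ ξ : ι → ℝ, lam₀ * ∑ i, ξ i ^ 2 ≤ ∑ l, ∑ j, M l j * ξ l * ξ j)
    (hN : ∀ ξ : ι → ℝ, lam₀ * ∑ i, ξ i ^ 2 ≤ ∑ l, ∑ j, N l j * ξ l * ξ j)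
    {k : ι} (hMk : M k k ≤ Λ₀) (hNk : N k k ≤ Λ₀) {a : ι → ι → ℂ}
    (ha : ∀ l j, a l j = (M l j : ℂ) + (γ : ℂ) * (N l j : ℂ) * Complex.I) (ξ : ι → ℝ) :
    lam₀ / Λ₀ * ∑ i, ξ i ^ 2 ≤
      ((a k k)⁻¹ * ∑ l, ∑ j, a l j * (ξ l : ℂ) * (ξ j : ℂ)).re := by
  have hre (l j : ι) : (a l j).re = M l j := by simp [ha]
  have him (l j : ι) : (a l j).im = γ * N l j := by simp [ha]
  have hMpos : 0 < M k k := hlam₀.trans_le (le_diag_of_le_quadForm hM k)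
  have hNpos : 0 < N k k := hlam₀.trans_le (le_diag_of_le_quadForm hN k)
  have ha0 : a k k ≠ 0 := fun h => hMpos.ne' (by rw [← hre, h, Complex.zero_re])
  have hMform := div_mul_sum_sq_mul_diag_le_quadForm hlam₀ hM hMk ξ
  have hNform := div_mul_sum_sq_mul_diag_le_quadForm hlam₀ hN hNk ξ
  have hreForm : (∑ l, ∑ j, a l j * (ξ l : ℂ) * (ξ j : ℂ)).re =
      ∑ l, ∑ j, M l j * ξ l * ξ j := by
    simp only [re_sum_sum_mul_ofReal_mul_ofReal, hre]
  have himForm : (∑ l, ∑ j, a l j * (ξ l : ℂ) * (ξ j : ℂ)).im =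
      γ * ∑ l, ∑ j, N l j * ξ l * ξ j := by
    simp only [im_sum_sum_mul_ofReal_mul_ofReal, him, mul_assoc γ, Finset.mul_sum]
  rw [le_re_inv_mul_iff ha0, Complex.normSq_apply, hreForm, himForm, hre, him]
  set c := lam₀ / Λ₀ * ∑ i, ξ i ^ 2
  calc c * (M k k * M k k + γ * N k k * (γ * N k k))
      = M k k * (c * M k k) + γ ^ 2 * N k k * (c * N k k) := by ring
    _ ≤ M k k * (∑ l, ∑ j, M l j * ξ l * ξ j)
          + γ ^ 2 * N k k * (∑ l, ∑ j, N l j * ξ l * ξ j) := by gcongr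
    _ = M k k * (∑ l, ∑ j, M l j * ξ l * ξ j)
          + γ * N k k * (γ * ∑ l, ∑ j, N l j * ξ l * ξ j) := by ring

/-- `Re(a_nn⁻¹ · 𝒜ξ·ξ) ≥ (lam₀²/Λ₀²)|ξ|²` for every `ξ ∈ ℝⁿ`,
where `𝒜 = M + iγN` is a complex symmetric matrix whose real and imaginary
parts satisfy two-sided ellipticity bounds `lam₀|ξ|² ≤ Mξ·ξ, Nξ·ξ ≤ Λ₀|ξ|²`. -/
theorem stmt_6 (n : ℕ) (hn : 2 ≤ n)
    (M N : Fin n → Fin n → ℝ) (γ lam₀ Λ₀ : ℝ)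
    (hγ : 0 < γ) (hlam₀ : 0 < lam₀) (hlamΛ : lam₀ ≤ Λ₀)
    (hMsym : ∀ l j, M l j = M j l) (hNsym : ∀ l j, N l j = N j l)
    (hM : ∀ ξ : Fin n → ℝ,
      lam₀ * ∑ i, ξ i ^ 2 ≤ ∑ l, ∑ j, M l j * ξ l * ξ j ∧
      ∑ l, ∑ j, M l j * ξ l * ξ j ≤ Λ₀ * ∑ i, ξ i ^ 2)
    (hN : ∀ ξ : Fin n → ℝ,
      lam₀ * ∑ i, ξ i ^ 2 ≤ ∑ l, ∑ j, N l j * ξ l * ξ j ∧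
      ∑ l, ∑ j, N l j * ξ l * ξ j ≤ Λ₀ * ∑ i, ξ i ^ 2)
    (a : Fin n → Fin n → ℂ)
    (ha : ∀ l j, a l j = (M l j : ℂ) + (γ : ℂ) * (N l j : ℂ) * Complex.I)
    (en : Fin n) (hen : (en : ℕ) = n - 1) :
    ∀ ξ : Fin n → ℝ,
      lam₀ ^ 2 / Λ₀ ^ 2 * ∑ i, ξ i ^ 2 ≤
        ((a en en)⁻¹ * ∑ l, ∑ j, a l j * (ξ l : ℂ) * (ξ j : ℂ)).re := by
  intro ξ
  exact (mul_le_mul_of_nonneg_right (sq_div_sq_le_div_s6 hlam₀.le hlamΛ) (by positivity)).trans <|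
    stmt_6_general hlam₀ (fun ζ => (hM ζ).1) (fun ζ => (hN ζ).1)
      (diag_le_of_quadForm_le (fun ζ => (hM ζ).2) en)
      (diag_le_of_quadForm_le (fun ζ => (hN ζ).2) en) ha ξ
end

section
/- For every ξ' ∈ ℝ^{n−1}: λ̃₁|ξ'|² ≤ Re(Σ_{ℓ,j=1}^{n−1}(a_{ℓj}/a_{nn})ξ_ℓξ_j) − E(ξ')², and consequently Re b(ξ') ≥ λ̃₁|ξ'|² + F(ξ')², which is strictly positive whenever ξ' ≠ 0. Here λ̃₁ = λ₀²/Λ₀². -/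
/-!
Normalise `α = a / aₙₙ` and put `w = ∑ αₙⱼ ξⱼ = E + iF`. Appending to `ξ` the real number `-E` as
`n`-th coordinate adds `E² - 2 E w` to `∑ αₗⱼ ξₗ ξⱼ`, and the real part of this is `-E²`.
Hence `Re (∑ αₗⱼ ξₗ ξⱼ) - E²` is the real part of `(m + iγk) / (d + iγe)`, where `m`, `k` are the
values of `M`, `N` at a real vector of length at least `|ξ|`, and `d = Mₙₙ`, `e = Nₙₙ`.
It equals `(m d + γ² k e) / (d² + γ² e²)`, which is at least `λ₀ |ξ|² / Λ₀` because
`d² + γ² e² ≤ Λ₀ (d + γ² e)`. The bound on `Re b` follows from `b = ∑ αₗⱼ ξₗ ξⱼ - w²`.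
-/

section Scalar

theorem div_le_re_div {r Λ γ m k d e : ℝ} (hr : 0 ≤ r) (hm : r ≤ m) (hk : r ≤ k)
    (hd : 0 < d) (he : 0 ≤ e) (hdΛ : d ≤ Λ) (heΛ : e ≤ Λ) :
    r / Λ ≤ (((m : ℂ) + γ * k * Complex.I) / ((d : ℂ) + γ * e * Complex.I)).re := by
  have hΛ : 0 < Λ := hd.trans_le hdΛ
  have re_eq : (((m : ℂ) + γ * k * Complex.I) / ((d : ℂ) + γ * e * Complex.I)).re =
      (m * d + γ ^ 2 * (k * e)) / (d ^ 2 + γ ^ 2 * e ^ 2) := by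
    simp only [Complex.div_re, Complex.add_re, Complex.ofReal_re, Complex.mul_re,
      Complex.ofReal_im, mul_zero, sub_zero, Complex.I_re, Complex.mul_im, zero_mul, add_zero,
      Complex.I_im, mul_one, sub_self, Complex.normSq_apply, Complex.add_im, zero_add]
    ring
  have denom_le : d ^ 2 + γ ^ 2 * e ^ 2 ≤ Λ * (d + γ ^ 2 * e) := by
    calc d ^ 2 + γ ^ 2 * e ^ 2 = d * d + γ ^ 2 * (e * e) := by ring
      _ ≤ Λ * d + γ ^ 2 * (Λ * e) := by gcongr
      _ = Λ * (d + γ ^ 2 * e) := by ring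
  rw [re_eq, div_le_div_iff₀ hΛ (by positivity)]
  calc r * (d ^ 2 + γ ^ 2 * e ^ 2) ≤ r * (Λ * (d + γ ^ 2 * e)) := by gcongr
    _ = (r * d + γ ^ 2 * (r * e)) * Λ := by ring
    _ ≤ (m * d + γ ^ 2 * (k * e)) * Λ := by gcongr

theorem sq_div_sq_le_div_s7 {lam Λ : ℝ} (hlam : 0 ≤ lam) (hΛ : lam ≤ Λ) :
    lam ^ 2 / Λ ^ 2 ≤ lam / Λ := by
  rw [← div_pow]
  exact pow_le_of_le_one (div_nonneg hlam (hlam.trans hΛ)) (div_le_one_of_le₀ hΛ (hlam.trans hΛ))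
    two_ne_zero

theorem sum_sq_pos {κ : Type*} [Fintype κ] {x : κ → ℝ} (hx : x ≠ 0) : 0 < ∑ i, x i ^ 2 := by
  simpa [dotProduct, sq] using Matrix.dotProduct_star_self_pos_iff.2 hx

end Scalar

section QuadForm

variable {ι κ R K : Type*} [Fintype ι] [Fintype κ]

/-- The quadratic form `∑ aₗⱼ vₗ vⱼ` of a square array of coefficients, written as a plain double
sum so that it unfolds to the sums of the main theorem. -/
def quadForm [CommSemiring R] (a : ι → ι → R) (v : ι → R) : R :=
  ∑ l, ∑ j, a l j * v l * v j

theorem quadForm_single [CommSemiring R] [DecidableEq ι] (a : ι → ι → R) (i : ι) :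
    quadForm a (Pi.single i 1) = a i i := by
  simp [quadForm, Pi.single_apply]

theorem quadForm_sub_single [CommRing R] [DecidableEq ι] {a : ι → ι → R}
    (ha : ∀ l j, a l j = a j l) (v : ι → R) (o : ι) (t : R) :
    quadForm a (v - Pi.single o t) =
      quadForm a v - 2 * t * ∑ j, a o j * v j + t ^ 2 * a o o := by
  have column : ∑ l, a l o * v l * t = t * ∑ j, a o j * v j := by
    rw [Finset.mul_sum]
    exact Finset.sum_congr rfl fun l _ ↦ by rw [ha l o]; ring
  have row : ∑ j, a o j * t * v j = t * ∑ j, a o j * v j := by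
    rw [Finset.mul_sum]
    exact Finset.sum_congr rfl fun j _ ↦ by ring
  simp only [quadForm, Pi.sub_apply, Pi.single_apply, mul_sub, sub_mul, Finset.sum_sub_distrib,
    mul_ite, ite_mul, mul_zero, zero_mul, Finset.sum_ite_irrel, Finset.sum_const_zero,
    Finset.sum_ite_eq', Finset.mem_univ, if_true, column, row]
  ring

theorem quadForm_eq_of_forall_notMem_range [CommSemiring R] {f : κ → ι}
    (hf : Function.Injective f) (a : ι → ι → R) {v : ι → R} (hv : ∀ i ∉ Set.range f, v i = 0) :
    quadForm a v = quadForm (fun l j ↦ a (f l) (f j)) (fun k ↦ v (f k)) := by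
  refine (Fintype.sum_of_injective f hf _ _ (fun l hl ↦ by simp [hv l hl]) fun l ↦ ?_).symm
  exact Fintype.sum_of_injective f hf _ _ (fun j hj ↦ by simp [hv j hj]) fun _ ↦ rfl

theorem quadForm_div [Semifield K] (a : ι → ι → K) (c : K) (v : ι → K) :
    quadForm (fun l j ↦ a l j / c) v = quadForm a v / c := by
  simp only [quadForm, div_mul_eq_mul_div, Finset.sum_div]

theorem inv_sq_mul_quadForm_schurComplement [Field K] (A : κ → κ → K) (p : κ → K) {c : K}
    (hc : c ≠ 0) (x : κ → K) :
    (c ^ 2)⁻¹ * quadForm (fun l j ↦ A l j * c - p l * p j) x =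
      quadForm (fun l j ↦ A l j / c) x - (∑ j, p j / c * x j) ^ 2 := by
  rw [sq (∑ j, p j / c * x j), Finset.sum_mul_sum]
  simp only [quadForm, Finset.mul_sum, ← Finset.sum_sub_distrib]
  refine Finset.sum_congr rfl fun l _ ↦ Finset.sum_congr rfl fun j _ ↦ ?_
  field_simp

theorem quadForm_ofReal_add_mul_I {M N : ι → ι → ℝ} {γ : ℝ} {a : ι → ι → ℂ}
    (ha : ∀ l j, a l j = (M l j : ℂ) + (γ : ℂ) * (N l j : ℂ) * Complex.I) (v : ι → ℝ) :
    quadForm a (fun i ↦ (v i : ℂ)) =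
      ((quadForm M v : ℝ) : ℂ) + (γ : ℂ) * ((quadForm N v : ℝ) : ℂ) * Complex.I := by
  simp only [quadForm, ha, Complex.ofReal_sum, Complex.ofReal_mul, Finset.mul_sum, Finset.sum_mul,
    ← Finset.sum_add_distrib]
  exact Finset.sum_congr rfl fun l _ ↦ Finset.sum_congr rfl fun j _ ↦ by ring

theorem re_quadForm_sub_sq_re [DecidableEq ι] {α : ι → ι → ℂ} (hα : ∀ l j, α l j = α j l) {o : ι}
    (hαo : α o o = 1) (v : ι → ℝ) {E F : ℝ}
    (hEF : ∑ j, α o j * (v j : ℂ) = (E : ℂ) + (F : ℂ) * Complex.I) :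
    (quadForm α (fun i ↦ (v i : ℂ))).re - E ^ 2 =
      (quadForm α (fun i ↦ ((v - Pi.single o E : ι → ℝ) i : ℂ))).re := by
  have cast_sub : (fun i ↦ ((v - Pi.single o E : ι → ℝ) i : ℂ)) =
      (fun i ↦ (v i : ℂ)) - Pi.single o (E : ℂ) := by
    ext i
    simp [Pi.single_apply, apply_ite Complex.ofReal]
  rw [cast_sub, quadForm_sub_single hα, hEF, hαo]
  simp only [← Complex.ofReal_pow, mul_one, Complex.add_re, Complex.sub_re, Complex.mul_re,
    Complex.re_ofNat, Complex.ofReal_re, Complex.im_ofNat, Complex.ofReal_im, mul_zero, sub_zero,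
    Complex.I_re, Complex.I_im, sub_self, add_zero, Complex.mul_im, zero_mul, Complex.add_im,
    zero_add]
  ring

end QuadForm

section Elliptic

variable {ι κ : Type*} [Fintype ι] [Fintype κ]

/-- The lower ellipticity bound `λ |v|² ≤ ∑ Mₗⱼ vₗ vⱼ`; the upper bound is kept separate because it
enters only through a diagonal coefficient. -/
def IsElliptic (lam : ℝ) (M : ι → ι → ℝ) : Prop :=
  ∀ v : ι → ℝ, lam * ∑ i, v i ^ 2 ≤ quadForm M v

variable {M N : ι → ι → ℝ} {γ lam Λ : ℝ} {a : ι → ι → ℂ} {o : ι} {f : κ → ι}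

theorem IsElliptic.le_diag (hM : IsElliptic lam M) (i : ι) : lam ≤ M i i := by
  classical
  simpa [quadForm_single, Pi.single_apply] using hM (Pi.single i 1)

theorem diag_le_of_quadForm_le_s7 (hM : ∀ v : ι → ℝ, quadForm M v ≤ Λ * ∑ i, v i ^ 2) (i : ι) :
    M i i ≤ Λ := by
  classical
  simpa [quadForm_single, Pi.single_apply] using hM (Pi.single i 1)

theorem div_mul_sum_sq_le_re_quadForm_div (hlam : 0 < lam) (hM : IsElliptic lam M)
    (hN : IsElliptic lam N)
    (ha : ∀ l j, a l j = (M l j : ℂ) + (γ : ℂ) * (N l j : ℂ) * Complex.I)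
    (hMo : M o o ≤ Λ) (hNo : N o o ≤ Λ) (v : ι → ℝ) :
    lam / Λ * ∑ i, v i ^ 2 ≤ (quadForm a (fun i ↦ (v i : ℂ)) / a o o).re := by
  rw [quadForm_ofReal_add_mul_I ha, ha o o, div_mul_eq_mul_div]
  exact div_le_re_div (by positivity) (hM v) (hN v) (hlam.trans_le (hM.le_diag o))
    (hlam.le.trans (hN.le_diag o)) hMo hNo

theorem sum_sq_le_sum_sq_sub_single [DecidableEq ι] (hf : Function.Injective f)
    (ho : o ∉ Set.range f) (v : ι → ℝ) (t : ℝ) :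
    ∑ k, v (f k) ^ 2 ≤ ∑ i, (v - Pi.single o t : ι → ℝ) i ^ 2 := by
  have off_pivot (k : κ) : v (f k) = (v - Pi.single o t : ι → ℝ) (f k) := by
    have hk : f k ≠ o := fun h ↦ ho ⟨k, h⟩
    simp [hk]
  calc ∑ k, v (f k) ^ 2 = ∑ k, (v - Pi.single o t : ι → ℝ) (f k) ^ 2 := by simp only [off_pivot]
    _ = ∑ i ∈ Finset.univ.map ⟨f, hf⟩, (v - Pi.single o t : ι → ℝ) i ^ 2 :=
      (Finset.sum_map Finset.univ ⟨f, hf⟩ fun i ↦ (v - Pi.single o t : ι → ℝ) i ^ 2).symm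
    _ ≤ ∑ i, (v - Pi.single o t : ι → ℝ) i ^ 2 :=
      Finset.sum_le_univ_sum_of_nonneg fun i ↦ sq_nonneg _

theorem IsElliptic.add_mul_I_diag_ne_zero (hM : IsElliptic lam M) (hlam : 0 < lam)
    (ha : ∀ l j, a l j = (M l j : ℂ) + (γ : ℂ) * (N l j : ℂ) * Complex.I) (o : ι) :
    a o o ≠ 0 := fun h ↦
  (hlam.trans_le (hM.le_diag o)).ne' (by simpa [ha] using congrArg Complex.re h)

theorem div_mul_sum_sq_sub_single_le_re_quadForm_sub_sq [DecidableEq ι] (hlam : 0 < lam)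
    (hMsym : ∀ l j, M l j = M j l) (hNsym : ∀ l j, N l j = N j l)
    (hM : IsElliptic lam M) (hN : IsElliptic lam N)
    (ha : ∀ l j, a l j = (M l j : ℂ) + (γ : ℂ) * (N l j : ℂ) * Complex.I)
    (hMo : M o o ≤ Λ) (hNo : N o o ≤ Λ) (v : ι → ℝ) {E F : ℝ}
    (hEF : ∑ j, a o j / a o o * (v j : ℂ) = (E : ℂ) + (F : ℂ) * Complex.I) :
    lam / Λ * ∑ i, (v - Pi.single o E : ι → ℝ) i ^ 2 ≤
      (quadForm (fun l j ↦ a l j / a o o) (fun i ↦ (v i : ℂ))).re - E ^ 2 := by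
  have symm (l j : ι) : a l j / a o o = a j l / a o o := by rw [ha l j, ha j l, hMsym, hNsym]
  have pivot : a o o / a o o = 1 := div_self (hM.add_mul_I_diag_ne_zero hlam ha o)
  rw [re_quadForm_sub_sq_re (α := fun l j ↦ a l j / a o o) symm pivot v hEF, quadForm_div]
  exact div_mul_sum_sq_le_re_quadForm_div hlam hM hN ha hMo hNo _

theorem div_mul_sum_sq_le_re_quadForm_sub_sq (hlam : 0 < lam)
    (hMsym : ∀ l j, M l j = M j l) (hNsym : ∀ l j, N l j = N j l)
    (hM : IsElliptic lam M) (hN : IsElliptic lam N)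
    (ha : ∀ l j, a l j = (M l j : ℂ) + (γ : ℂ) * (N l j : ℂ) * Complex.I)
    (hMo : M o o ≤ Λ) (hNo : N o o ≤ Λ)
    (hf : Function.Injective f) (ho : o ∉ Set.range f) (x : κ → ℝ) {E F : ℝ}
    (hEF : ∑ j, a o (f j) / a o o * (x j : ℂ) = (E : ℂ) + (F : ℂ) * Complex.I) :
    lam / Λ * ∑ k, x k ^ 2 ≤
      (quadForm (fun l j ↦ a (f l) (f j) / a o o) (fun k ↦ (x k : ℂ))).re - E ^ 2 := by
  classical
  have hΛ : 0 < Λ := hlam.trans_le ((hM.le_diag o).trans hMo)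
  let v : ι → ℝ := Function.extend f x 0
  have v_apply (k : κ) : v (f k) = x k := hf.extend_apply x 0 k
  have v_off (i : ι) (hi : i ∉ Set.range f) : (v i : ℂ) = 0 := by
    simp [v, Function.extend_apply' _ _ _ hi]
  have hv : ∑ j, a o j / a o o * (v j : ℂ) = (E : ℂ) + (F : ℂ) * Complex.I := by
    rw [← hEF]
    exact (Fintype.sum_of_injective f hf _ _ (fun j hj ↦ by simp [v_off j hj])
      fun k ↦ by rw [v_apply]).symm
  have sum_le := sum_sq_le_sum_sq_sub_single hf ho v E
  have full := div_mul_sum_sq_sub_single_le_re_quadForm_sub_sq hlam hMsym hNsym hM hN ha hMo hNo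
    v hv
  rw [quadForm_eq_of_forall_notMem_range hf _ v_off] at full
  simp only [v_apply] at sum_le full
  exact (mul_le_mul_of_nonneg_left sum_le (by positivity)).trans full

end Elliptic

section Emb

theorem emb_injective (n : ℕ) : Function.Injective (emb n) :=
  Fin.castLE_injective _

theorem notMem_range_emb {n : ℕ} {i : Fin n} (hi : (i : ℕ) = n - 1) : i ∉ Set.range (emb n) := by
  rintro ⟨j, rfl⟩
  exact j.isLt.ne hi

end Emb

theorem stmt_7_general {ι κ : Type*} [Fintype ι] [Fintype κ] {M N : ι → ι → ℝ} {γ lam₀ Λ₀ : ℝ}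
    (hlam₀ : 0 < lam₀) (hMsym : ∀ l j, M l j = M j l) (hNsym : ∀ l j, N l j = N j l)
    (hM : IsElliptic lam₀ M) (hN : IsElliptic lam₀ N) {a : ι → ι → ℂ}
    (ha : ∀ l j, a l j = (M l j : ℂ) + (γ : ℂ) * (N l j : ℂ) * Complex.I)
    {o : ι} (hMo : M o o ≤ Λ₀) (hNo : N o o ≤ Λ₀)
    {f : κ → ι} (hf : Function.Injective f) (ho : o ∉ Set.range f) (x : κ → ℝ) {E F : ℝ}
    (hEF : ∑ j, a o (f j) / a o o * (x j : ℂ) = (E : ℂ) + (F : ℂ) * Complex.I) :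
    (lam₀ / Λ₀ * ∑ i, x i ^ 2 ≤
      (quadForm (fun l j ↦ a (f l) (f j) / a o o) (fun i ↦ (x i : ℂ))).re - E ^ 2) ∧
    (lam₀ / Λ₀ * (∑ i, x i ^ 2) + F ^ 2 ≤ ((a o o ^ 2)⁻¹ *
      quadForm (fun l j ↦ a (f l) (f j) * a o o - a o (f l) * a o (f j))
        (fun i ↦ (x i : ℂ))).re) ∧
    (x ≠ 0 → 0 < ((a o o ^ 2)⁻¹ *
      quadForm (fun l j ↦ a (f l) (f j) * a o o - a o (f l) * a o (f j))
        (fun i ↦ (x i : ℂ))).re) := by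
  have hao : a o o ≠ 0 := hM.add_mul_I_diag_ne_zero hlam₀ ha o
  have hΛ₀ : 0 < Λ₀ := hlam₀.trans_le ((hM.le_diag o).trans hMo)
  have re_sq : (((E : ℂ) + (F : ℂ) * Complex.I) ^ 2).re = E ^ 2 - F ^ 2 := by simp [sq]
  have lower := div_mul_sum_sq_le_re_quadForm_sub_sq hlam₀ hMsym hNsym hM hN ha hMo hNo hf ho x hEF
  rw [inv_sq_mul_quadForm_schurComplement (fun l j ↦ a (f l) (f j)) (fun j ↦ a o (f j)) hao,
    hEF, Complex.sub_re, re_sq]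
  refine ⟨lower, by linarith, fun hx ↦ ?_⟩
  have : 0 < lam₀ / Λ₀ * ∑ i, x i ^ 2 := mul_pos (by positivity) (sum_sq_pos hx)
  linarith [sq_nonneg F]

/-- `λ̃₁|ξ'|² ≤ Re(Σ (a_ℓj/a_nn) ξ'_ℓ ξ'_j) − E(ξ')²`, hence
`Re b(ξ') ≥ λ̃₁|ξ'|² + F(ξ')² > 0` for `ξ' ≠ 0`, where `λ̃₁ = λ₀²/Λ₀²`. -/
theorem stmt_7
    (n : ℕ) (hn : 2 ≤ n)
    (M N : Fin n → Fin n → ℝ) (γ lam₀ Λ₀ : ℝ)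
    (hγ : 0 < γ) (hlam₀ : 0 < lam₀) (hlamΛ : lam₀ ≤ Λ₀)
    (hMsym : ∀ l j, M l j = M j l) (hNsym : ∀ l j, N l j = N j l)
    (hM : ∀ ξ : Fin n → ℝ,
      lam₀ * ∑ i, ξ i ^ 2 ≤ ∑ l, ∑ j, M l j * ξ l * ξ j ∧
      ∑ l, ∑ j, M l j * ξ l * ξ j ≤ Λ₀ * ∑ i, ξ i ^ 2)
    (hN : ∀ ξ : Fin n → ℝ,
      lam₀ * ∑ i, ξ i ^ 2 ≤ ∑ l, ∑ j, N l j * ξ l * ξ j ∧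
      ∑ l, ∑ j, N l j * ξ l * ξ j ≤ Λ₀ * ∑ i, ξ i ^ 2)
    (a : Fin n → Fin n → ℂ)
    (ha : ∀ l j, a l j = (M l j : ℂ) + (γ : ℂ) * (N l j : ℂ) * Complex.I)
    (en : Fin n) (hen : (en : ℕ) = n - 1)
    (E F : (Fin (n - 1) → ℝ) → ℝ)
    (hEF : ∀ ξ' : Fin (n - 1) → ℝ,
      ∑ j, a en (emb n j) / a en en * (ξ' j : ℂ) = (E ξ' : ℂ) + (F ξ' : ℂ) * Complex.I) :
    ∀ ξ' : Fin (n - 1) → ℝ,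
      (lam₀ ^ 2 / Λ₀ ^ 2 * ∑ i, ξ' i ^ 2 ≤
        (∑ l, ∑ j, a (emb n l) (emb n j) / a en en * (ξ' l : ℂ) * (ξ' j : ℂ)).re - E ξ' ^ 2) ∧
      (lam₀ ^ 2 / Λ₀ ^ 2 * (∑ i, ξ' i ^ 2) + F ξ' ^ 2 ≤ (((a en en) ^ 2)⁻¹ * ∑ l, ∑ j, (a (emb n l) (emb n j) * a en en - a en (emb n l) * a en (emb n j)) * (ξ' l : ℂ) * (ξ' j : ℂ)).re) ∧
      (ξ' ≠ 0 → 0 < (((a en en) ^ 2)⁻¹ * ∑ l, ∑ j, (a (emb n l) (emb n j) * a en en - a en (emb n l) * a en (emb n j)) * (ξ' l : ℂ) * (ξ' j : ℂ)).re) := by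
  intro ξ'
  have weaken : lam₀ ^ 2 / Λ₀ ^ 2 * ∑ i, ξ' i ^ 2 ≤ lam₀ / Λ₀ * ∑ i, ξ' i ^ 2 :=
    mul_le_mul_of_nonneg_right (sq_div_sq_le_div_s7 hlam₀.le hlamΛ) (by positivity)
  obtain ⟨h_re, h_schur, h_pos⟩ := stmt_7_general hlam₀ hMsym hNsym (fun v ↦ (hM v).1)
    (fun v ↦ (hN v).1) ha (diag_le_of_quadForm_le_s7 (fun v ↦ (hM v).2) en)
    (diag_le_of_quadForm_le_s7 (fun v ↦ (hN v).2) en) (emb_injective n) (notMem_range_emb hen) ξ'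
    (hEF ξ')
  exact ⟨weaken.trans h_re, (add_le_add_left weaken _).trans h_schur, h_pos⟩
end

section
/- Let t ≥ 1 and define f(x,y) = (1 − xy)/(√(1+x²)·√(1+y²)) for (x,y) ∈ [0,t]×[0,t]. Then f attains its minimum on [0,t]×[0,t] at (x,y) = (t,t); equivalently, f(x,y) ≥ (1 − t²)/(1 + t²) for all (x,y) ∈ [0,t]×[0,t]. -/
/-!
With `α = arctan x` and `β = arctan y`, the function is `f(x, y) = cos (α + β)`. If `|x|, |y| ≤ t`,
then `|α + β| ≤ 2 arctan t < π`, and cosine is even and decreasing on `[0, π]`.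
-/

open Real

theorem cos_arctan_add_arctan (x y : ℝ) :
    cos (arctan x + arctan y) = (1 - x * y) / (√(1 + x ^ 2) * √(1 + y ^ 2)) := by
  rw [cos_add, cos_arctan, cos_arctan, sin_arctan, sin_arctan]
  ring

theorem cos_arctan_add_arctan_self (t : ℝ) :
    cos (arctan t + arctan t) = (1 - t ^ 2) / (1 + t ^ 2) := by
  rw [cos_arctan_add_arctan, mul_self_sqrt (by positivity), ← sq]

theorem abs_arctan_le_of_abs_le {x a : ℝ} (hx : |x| ≤ a) : |arctan x| ≤ arctan a := by
  rw [abs_le] at hx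
  rw [abs_le, ← arctan_neg]
  exact ⟨arctan_mono hx.1, arctan_mono hx.2⟩

theorem cos_arctan_add_arctan_le_of_abs_le {x y a b : ℝ} (hx : |x| ≤ a) (hy : |y| ≤ b) :
    cos (arctan a + arctan b) ≤ cos (arctan x + arctan y) := by
  have angle_le : |arctan x + arctan y| ≤ arctan a + arctan b :=
    (abs_add_le _ _).trans
      (add_le_add (abs_arctan_le_of_abs_le hx) (abs_arctan_le_of_abs_le hy))
  have angle_le_pi : arctan a + arctan b ≤ π := by
    linarith [arctan_lt_pi_div_two a, arctan_lt_pi_div_two b]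
  rw [← cos_abs (arctan x + arctan y)]
  exact cos_le_cos_of_nonneg_of_le_pi (abs_nonneg _) angle_le_pi angle_le

theorem stmt_13_general {t x y : ℝ} (hx : |x| ≤ t) (hy : |y| ≤ t) :
    (1 - t ^ 2) / (1 + t ^ 2) ≤ (1 - x * y) / (√(1 + x ^ 2) * √(1 + y ^ 2)) := by
  rw [← cos_arctan_add_arctan_self, ← cos_arctan_add_arctan]
  exact cos_arctan_add_arctan_le_of_abs_le hx hy

/-- For `t ≥ 1`, the function `f(x,y) = (1 - xy)/(√(1+x²)·√(1+y²))`
attains its minimum on `[0,t]×[0,t]` at `(t,t)`; equivalently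
`f(x,y) ≥ (1 - t²)/(1 + t²)` for all `(x,y) ∈ [0,t]×[0,t]`. -/
theorem stmt_13 (t : ℝ) (ht : 1 ≤ t) :
    ∀ x y : ℝ, x ∈ Set.Icc (0:ℝ) t → y ∈ Set.Icc (0:ℝ) t →
      (1 - t ^ 2) / (1 + t ^ 2) ≤
        (1 - x * y) / (Real.sqrt (1 + x ^ 2) * Real.sqrt (1 + y ^ 2)) := by
  rintro x y ⟨hx₀, hxt⟩ ⟨hy₀, hyt⟩
  exact stmt_13_general ((abs_of_nonneg hx₀).trans_le hxt) ((abs_of_nonneg hy₀).trans_le hyt)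
end

section
/- There exist constants C₁, C₂ > 0, depending only on λ₀ and Λ₀ (and not on γ), such that for all ξ, v ∈ ℝⁿ: if p(ξ + iv) = 0, then C₁|ξ| ≤ |v| ≤ C₂|ξ|, where p(ζ) = Σ_{ℓ,j=1}^n a_{ℓj}ζ_ℓζ_j for ζ ∈ ℂⁿ. -/
/-!
Write `Q_M`, `Q_N` for the quadratic forms of `M` and `N`, with polar forms `B_M`, `B_N`. The real
and imaginary parts of `p(ξ + iv) = 0` say
`Q_M ξ - Q_M v = γ B_N(ξ, v)` and `γ (Q_N ξ - Q_N v) = -B_M(ξ, v)`.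
Multiplying them eliminates `γ`: `(Q_M ξ - Q_M v) (Q_N ξ - Q_N v) = -B_M(ξ, v) B_N(ξ, v)`.
If `λ₀ |ξ|² > Λ₀ |v|²`, then both factors on the left are at least `λ₀ |ξ|² - Λ₀ |v|²`, whereas the
right-hand side is at most `(2 Λ₀ |ξ| |v|)²` by Cauchy–Schwarz. Hence
`λ₀ |ξ|² - Λ₀ |v|² ≤ 2 Λ₀ |ξ| |v|`, which forces `λ₀ |ξ| ≤ 3 Λ₀ |v|`. The equations are invariant
under `(ξ, v, γ) ↦ (v, ξ, -γ)`, which gives the other inequality.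
-/

open QuadraticMap (polar polar_comm polar_self polarBilin_apply_apply linMulLin)

theorem mul_le_three_mul_of_sub_sq_le {lam Lam s t : ℝ} (hlam : 0 < lam) (hlamLam : lam ≤ Lam)
    (ht : 0 ≤ t) (h : lam * s ^ 2 - Lam * t ^ 2 ≤ 2 * Lam * s * t) :
    lam * s ≤ 3 * Lam * t := by
  by_contra! hlt
  have hLam : 0 < Lam := hlam.trans_le hlamLam
  have hts : t < s := by
    refine lt_of_mul_lt_mul_left ?_ hlam.le
    linarith [mul_le_mul_of_nonneg_right hlamLam ht, mul_nonneg hLam.le ht]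
  have h_large : 3 * Lam * t * s < lam * s * s := mul_lt_mul_of_pos_right hlt (ht.trans_lt hts)
  have h_small : Lam * t * t ≤ Lam * t * s := by gcongr
  linarith

section CauchySchwarz

variable {R E : Type*} [CommRing R] [LinearOrder R] [IsStrictOrderedRing R]
  [AddCommGroup E] [Module R E]

theorem sq_polar_le_four_mul {Q : QuadraticForm R E} (hQ : ∀ x, 0 ≤ Q x) (x y : E) :
    polar Q x y ^ 2 ≤ 4 * (Q x * Q y) := by
  have h_nonneg : ∀ z, 0 ≤ Q.polarBilin z z := fun z => by
    simpa only [polarBilin_apply_apply, polar_self] using nsmul_nonneg (hQ z) 2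
  have h_symm : Q.polarBilin.IsSymm := ⟨fun z w => polar_comm Q z w⟩
  have h_cauchy := LinearMap.BilinForm.apply_sq_le_of_symm _ h_nonneg h_symm x y
  simp only [polarBilin_apply_apply, polar_self, nsmul_eq_mul, Nat.cast_ofNat] at h_cauchy
  linarith

end CauchySchwarz

section Elliptic

variable {E : Type*} [SeminormedAddCommGroup E] [NormedSpace ℝ E]

/-- Uniform ellipticity of a real quadratic form: `Q` is comparable to the squared norm, with
lower constant `lam` and upper constant `Lam`. -/
structure IsElliptic_s17 (Q : QuadraticForm ℝ E) (lam Lam : ℝ) : Prop where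
  le_apply : ∀ x, lam * ‖x‖ ^ 2 ≤ Q x
  apply_le : ∀ x, Q x ≤ Lam * ‖x‖ ^ 2

variable {M N Q : QuadraticForm ℝ E} {lam Lam γ : ℝ} {x y : E}

theorem IsElliptic_s17.sq_polar_le (hQ : IsElliptic_s17 Q lam Lam) (hlam : 0 ≤ lam) (x y : E) :
    polar Q x y ^ 2 ≤ (2 * Lam * ‖x‖ * ‖y‖) ^ 2 := by
  have h_nonneg : ∀ z, 0 ≤ Q z := fun z => (by positivity : 0 ≤ lam * ‖z‖ ^ 2).trans (hQ.le_apply z)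
  calc
    polar Q x y ^ 2 ≤ 4 * (Q x * Q y) := sq_polar_le_four_mul h_nonneg x y
    _ ≤ 4 * ((Lam * ‖x‖ ^ 2) * (Lam * ‖y‖ ^ 2)) := by
      gcongr
      exacts [h_nonneg y, (h_nonneg x).trans (hQ.apply_le x), hQ.apply_le x, hQ.apply_le y]
    _ = (2 * Lam * ‖x‖ * ‖y‖) ^ 2 := by ring

theorem IsElliptic_s17.mul_sq_norm_sub_le (hQ : IsElliptic_s17 Q lam Lam) (x y : E) :
    lam * ‖x‖ ^ 2 - Lam * ‖y‖ ^ 2 ≤ Q x - Q y :=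
  sub_le_sub (hQ.le_apply x) (hQ.apply_le y)

/-- `x + i y` is a zero of the complex quadratic form `M + i γ N`, extended from `E` to the
complexification of `E`. The two fields are the real and the imaginary part of that equation, so
that the complexification itself is never needed. -/
structure IsComplexRoot (M N : QuadraticForm ℝ E) (γ : ℝ) (x y : E) : Prop where
  re_eq : M x - M y = γ * polar N x y
  im_eq : γ * (N x - N y) = -polar M x y

theorem IsComplexRoot.swap (h_root : IsComplexRoot M N γ x y) : IsComplexRoot M N (-γ) y x where
  re_eq := by rw [polar_comm]; linarith [h_root.re_eq]
  im_eq := by rw [polar_comm]; linarith [h_root.im_eq]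

theorem mul_sq_norm_sub_le_of_isComplexRoot (hlam : 0 ≤ lam) (hLam : 0 ≤ Lam)
    (hM : IsElliptic_s17 M lam Lam) (hN : IsElliptic_s17 N lam Lam)
    (h_root : IsComplexRoot M N γ x y) :
    lam * ‖x‖ ^ 2 - Lam * ‖y‖ ^ 2 ≤ 2 * Lam * ‖x‖ * ‖y‖ := by
  have h_bound : 0 ≤ 2 * Lam * ‖x‖ * ‖y‖ := by positivity
  rcases le_total (lam * ‖x‖ ^ 2 - Lam * ‖y‖ ^ 2) 0 with h_neg | h_pos
  · exact h_neg.trans h_bound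
  have h_prod : (M x - M y) * (N x - N y) = -(polar M x y * polar N x y) := by
    linear_combination (N x - N y) * h_root.re_eq + polar N x y * h_root.im_eq
  refine le_of_sq_le_sq ?_ h_bound
  calc
    (lam * ‖x‖ ^ 2 - Lam * ‖y‖ ^ 2) ^ 2 ≤ (M x - M y) * (N x - N y) := by
      rw [sq]
      have h_factor := hM.mul_sq_norm_sub_le x y
      exact mul_le_mul h_factor (hN.mul_sq_norm_sub_le x y) h_pos (h_pos.trans h_factor)
    _ ≤ (polar M x y ^ 2 + polar N x y ^ 2) / 2 := by
      rw [h_prod]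
      linarith [sq_nonneg (polar M x y + polar N x y)]
    _ ≤ (2 * Lam * ‖x‖ * ‖y‖) ^ 2 := by
      linarith [hM.sq_polar_le hlam x y, hN.sq_polar_le hlam x y]

theorem mul_norm_le_of_isComplexRoot (hlam : 0 < lam) (hlamLam : lam ≤ Lam)
    (hM : IsElliptic_s17 M lam Lam) (hN : IsElliptic_s17 N lam Lam)
    (h_root : IsComplexRoot M N γ x y) :
    lam * ‖x‖ ≤ 3 * Lam * ‖y‖ :=
  mul_le_three_mul_of_sub_sq_le hlam hlamLam (norm_nonneg y)
    (mul_sq_norm_sub_le_of_isComplexRoot hlam.le (hlam.le.trans hlamLam) hM hN h_root)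

theorem norm_bounds_of_isComplexRoot (hlam : 0 < lam) (hlamLam : lam ≤ Lam)
    (hM : IsElliptic_s17 M lam Lam) (hN : IsElliptic_s17 N lam Lam)
    (h_root : IsComplexRoot M N γ x y) :
    lam / (3 * Lam) * ‖x‖ ≤ ‖y‖ ∧ ‖y‖ ≤ 3 * Lam / lam * ‖x‖ := by
  have hLam : 0 < Lam := hlam.trans_le hlamLam
  have h_lower := mul_norm_le_of_isComplexRoot hlam hlamLam hM hN h_root
  have h_upper : lam * ‖y‖ ≤ 3 * Lam * ‖x‖ :=
    mul_norm_le_of_isComplexRoot hlam hlamLam hM hN h_root.swap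
  rw [div_mul_eq_mul_div, div_mul_eq_mul_div, div_le_iff₀ (by positivity), le_div_iff₀ hlam]
  constructor <;> linarith

end Elliptic

section Coordinates

variable {ι : Type*} [Fintype ι]

/-- The quadratic form with coefficients `A` on Euclidean space; it lives on `EuclideanSpace ℝ ι`,
not on `ι → ℝ`, so that `IsElliptic` refers to the Euclidean norm. -/
noncomputable def euclideanQuadraticForm (A : ι → ι → ℝ) : QuadraticForm ℝ (EuclideanSpace ℝ ι) :=
  ∑ l, ∑ j, A l j • linMulLin (EuclideanSpace.projₗ l) (EuclideanSpace.projₗ j)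

theorem euclideanQuadraticForm_apply (A : ι → ι → ℝ) (x : EuclideanSpace ℝ ι) :
    euclideanQuadraticForm A x = ∑ l, ∑ j, A l j * x l * x j := by
  simp [euclideanQuadraticForm, mul_assoc]

theorem isElliptic_euclideanQuadraticForm {A : ι → ι → ℝ} {lam Lam : ℝ}
    (hA : ∀ x : ι → ℝ, lam * ∑ i, x i ^ 2 ≤ ∑ l, ∑ j, A l j * x l * x j ∧
      ∑ l, ∑ j, A l j * x l * x j ≤ Lam * ∑ i, x i ^ 2) :
    IsElliptic_s17 (euclideanQuadraticForm A) lam Lam where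
  le_apply x := by
    simpa only [euclideanQuadraticForm_apply, EuclideanSpace.real_norm_sq_eq] using (hA x).1
  apply_le x := by
    simpa only [euclideanQuadraticForm_apply, EuclideanSpace.real_norm_sq_eq] using (hA x).2

theorem sum_mul_add_mul_I_mul_add_mul_I (A : ι → ι → ℝ) (x y : EuclideanSpace ℝ ι) :
    ∑ l, ∑ j, (A l j : ℂ) * (x l + y l * Complex.I) * (x j + y j * Complex.I) =
      (euclideanQuadraticForm A x - euclideanQuadraticForm A y : ℝ) +
        (polar (euclideanQuadraticForm A) x y : ℝ) * Complex.I := by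
  simp only [polar, euclideanQuadraticForm_apply, ← Finset.sum_sub_distrib, Complex.ofReal_sum,
    Finset.sum_mul, ← Finset.sum_add_distrib]
  refine Finset.sum_congr rfl fun l _ => Finset.sum_congr rfl fun j _ => ?_
  push_cast [PiLp.add_apply]
  linear_combination (A l j * y l * y j : ℂ) * Complex.I_sq

theorem isComplexRoot_euclideanQuadraticForm {M N : ι → ι → ℝ} {γ : ℝ}
    {x y : EuclideanSpace ℝ ι}
    (h : ∑ l, ∑ j, ((M l j : ℂ) + γ * N l j * Complex.I) * (x l + y l * Complex.I) *
      (x j + y j * Complex.I) = 0) :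
    IsComplexRoot (euclideanQuadraticForm M) (euclideanQuadraticForm N) γ x y := by
  have h_split :
      ∑ l, ∑ j, ((M l j : ℂ) + γ * N l j * Complex.I) * (x l + y l * Complex.I) *
          (x j + y j * Complex.I) =
        ∑ l, ∑ j, (M l j : ℂ) * (x l + y l * Complex.I) * (x j + y j * Complex.I) +
          γ * Complex.I *
            ∑ l, ∑ j, (N l j : ℂ) * (x l + y l * Complex.I) * (x j + y j * Complex.I) := by
    simp only [Finset.mul_sum, ← Finset.sum_add_distrib]
    refine Finset.sum_congr rfl fun l _ => Finset.sum_congr rfl fun j _ => ?_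
    ring
  rw [h_split, sum_mul_add_mul_I_mul_add_mul_I, sum_mul_add_mul_I_mul_add_mul_I] at h
  have h_re : euclideanQuadraticForm M x - euclideanQuadraticForm M y -
      γ * polar (euclideanQuadraticForm N) x y = 0 := by
    simpa [sub_eq_add_neg] using congrArg Complex.re h
  have h_im : polar (euclideanQuadraticForm M) x y +
      γ * (euclideanQuadraticForm N x - euclideanQuadraticForm N y) = 0 := by
    simpa using congrArg Complex.im h
  exact ⟨sub_eq_zero.mp h_re, eq_neg_of_add_eq_zero_right h_im⟩

end Coordinates

theorem stmt_17_general {ι : Type*} [Fintype ι] {lam Lam γ : ℝ} (hlam : 0 < lam)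
    (hlamLam : lam ≤ Lam) {M N : ι → ι → ℝ}
    (hM : ∀ x : ι → ℝ, lam * ∑ i, x i ^ 2 ≤ ∑ l, ∑ j, M l j * x l * x j ∧
      ∑ l, ∑ j, M l j * x l * x j ≤ Lam * ∑ i, x i ^ 2)
    (hN : ∀ x : ι → ℝ, lam * ∑ i, x i ^ 2 ≤ ∑ l, ∑ j, N l j * x l * x j ∧
      ∑ l, ∑ j, N l j * x l * x j ≤ Lam * ∑ i, x i ^ 2)
    {ξ v : ι → ℝ}
    (h_root : ∑ l, ∑ j, ((M l j : ℂ) + γ * N l j * Complex.I) * (ξ l + v l * Complex.I) *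
      (ξ j + v j * Complex.I) = 0) :
    lam / (3 * Lam) * √(∑ i, ξ i ^ 2) ≤ √(∑ i, v i ^ 2) ∧
      √(∑ i, v i ^ 2) ≤ 3 * Lam / lam * √(∑ i, ξ i ^ 2) := by
  have h_complex := isComplexRoot_euclideanQuadraticForm (x := .toLp 2 ξ) (y := .toLp 2 v) h_root
  simpa only [EuclideanSpace.norm_eq, Real.norm_eq_abs, sq_abs] using
    norm_bounds_of_isComplexRoot hlam hlamLam (isElliptic_euclideanQuadraticForm hM)
      (isElliptic_euclideanQuadraticForm hN) h_complex

/-- there are `C₁, C₂ > 0` depending only on `λ₀, Λ₀` (not on `γ`) such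
that for any matrix `𝒜 = M + iγN` as in the context and any `ξ, v ∈ ℝⁿ`,
`p(ξ + iv) = 0` implies `C₁|ξ| ≤ |v| ≤ C₂|ξ|`. -/
theorem stmt_17 (lam₀ Λ₀ : ℝ) (hlam₀ : 0 < lam₀) (hlamΛ : lam₀ ≤ Λ₀) :
    ∃ C₁ C₂ : ℝ, 0 < C₁ ∧ 0 < C₂ ∧
    ∀ (n : ℕ), 2 ≤ n →
    ∀ (M N : Fin n → Fin n → ℝ) (γ : ℝ), 0 < γ →
    (∀ l j, M l j = M j l) → (∀ l j, N l j = N j l) →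
    (∀ ξ : Fin n → ℝ,
      lam₀ * ∑ i, ξ i ^ 2 ≤ ∑ l, ∑ j, M l j * ξ l * ξ j ∧
      ∑ l, ∑ j, M l j * ξ l * ξ j ≤ Λ₀ * ∑ i, ξ i ^ 2) →
    (∀ ξ : Fin n → ℝ,
      lam₀ * ∑ i, ξ i ^ 2 ≤ ∑ l, ∑ j, N l j * ξ l * ξ j ∧
      ∑ l, ∑ j, N l j * ξ l * ξ j ≤ Λ₀ * ∑ i, ξ i ^ 2) →
    ∀ a : Fin n → Fin n → ℂ,
    (∀ l j, a l j = (M l j : ℂ) + (γ : ℂ) * (N l j : ℂ) * Complex.I) →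
    ∀ ξ v : Fin n → ℝ,
      (∑ l, ∑ j, a l j * ((ξ l : ℂ) + (v l : ℂ) * Complex.I) *
        ((ξ j : ℂ) + (v j : ℂ) * Complex.I)) = 0 →
      C₁ * Real.sqrt (∑ i, ξ i ^ 2) ≤ Real.sqrt (∑ i, v i ^ 2) ∧
      Real.sqrt (∑ i, v i ^ 2) ≤ C₂ * Real.sqrt (∑ i, ξ i ^ 2) := by
  have hΛ₀ : 0 < Λ₀ := hlam₀.trans_le hlamΛ
  exact ⟨lam₀ / (3 * Λ₀), 3 * Λ₀ / lam₀, by positivity, by positivity,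
    fun n _ M N γ _ _ _ hM hN a ha ξ v h_root =>
      stmt_17_general hlam₀ hlamΛ hM hN (by simpa only [ha] using h_root)⟩
end
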